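/- For all sufficiently large positive integers N, R_N(SL) > 3·N; in particular, any linear upper bound R_N(SL) ≤ C·N must have C > 3. -/

import Mathlib

/-- Weyl dimension (type A), 0-indexed, for `SL_{k+1}(ℂ)`. -/
def PA (k : ℕ) (a : Fin k → ℕ) : ℚ :=
  ∏ i ∈ Finset.range (k + 1), ∏ j ∈ Finset.range (k + 1),
    if i < j then
      ((∑ t ∈ Finset.Ico i j, if h : t < k then (a ⟨t, h⟩ : ℚ) else 0) / ((j : ℚ) - (i : ℚ)))
    else 1

/-- Pairs `(n, a)` counted by `R_N(SL)`: `n = k + 2 ≥ 2`, `a` a tuple of `k + 1` positive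
integers, nontrivial (some `a i ≥ 2`), dimension `≤ N`. -/
def SLSet (N : ℕ) : Set (Σ k : ℕ, Fin (k + 1) → ℕ) :=
  {p | (∀ i, 1 ≤ p.2 i) ∧ (∃ i, 2 ≤ p.2 i) ∧ PA (p.1 + 1) p.2 ≤ (N : ℚ)}

def slG (k : ℕ) (a : Fin k → ℕ) (i j : ℕ) : ℚ :=
    if i < j then
      ((∑ t ∈ Finset.Ico i j, if h : t < k then (a ⟨t, h⟩ : ℚ) else 0) / ((j : ℚ) - (i : ℚ)))
    else 1

lemma PA_eq (k : ℕ) (a : Fin k → ℕ) :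
    PA k a = ∏ i ∈ Finset.range (k + 1), ∏ j ∈ Finset.range (k + 1), slG k a i j := rfl

lemma sum_ind (i j s : ℕ) (h : i < j) :
    (∑ t ∈ Finset.Ico i j, ((1 : ℚ) + if t = s then 1 else 0))
      = (j : ℚ) - i + if (i ≤ s ∧ s < j) then 1 else 0 := by
  rw [Finset.sum_add_distrib, Finset.sum_ite_eq']
  simp [Nat.cast_sub h.le]

lemma slG_ge_one (k : ℕ) (a : Fin k → ℕ) (ha : ∀ i, 1 ≤ a i) (i j : ℕ) (hj : j ≤ k) :
    1 ≤ slG k a i j := by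
  unfold slG
  split_ifs with h
  · have hp : (0 : ℚ) < (j : ℚ) - i := by
      have : (i : ℚ) < j := by exact_mod_cast h
      linarith
    rw [le_div_iff₀ hp]
    calc 1 * ((j : ℚ) - i) = ∑ t ∈ Finset.Ico i j, (1 : ℚ) := by simp [Nat.cast_sub h.le]
      _ ≤ _ := by
        apply Finset.sum_le_sum
        intro t ht
        rw [Finset.mem_Ico] at ht
        rw [dif_pos (by omega)]
        exact_mod_cast ha _
  · exact le_rfl

lemma slG_ge (k : ℕ) (a : Fin k → ℕ) (ha : ∀ i, 1 ≤ a i) (s : Fin k) (hs : 2 ≤ a s)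
    (i j : ℕ) (hj : j ≤ k) (his : i ≤ s) (hsj : (s : ℕ) < j) :
    ((j : ℚ) - i + 1) / ((j : ℚ) - i) ≤ slG k a i j := by
  unfold slG
  have h : i < j := by omega
  have hp : (0 : ℚ) < (j : ℚ) - i := by
    have : (i : ℚ) < j := by exact_mod_cast h
    linarith
  rw [if_pos h]
  apply div_le_div_of_nonneg_right _ hp.le
  have := sum_ind i j s h
  rw [if_pos ⟨his, hsj⟩] at this
  rw [← this]
  apply Finset.sum_le_sum
  intro t ht
  rw [Finset.mem_Ico] at ht
  rw [dif_pos (by omega)]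
  split_ifs with hts
  · subst hts
    have : (2 : ℚ) ≤ a s := by exact_mod_cast hs
    simp only [Fin.eta]
    linarith
  · have := ha ⟨t, by omega⟩
    have : (1 : ℚ) ≤ a ⟨t, by omega⟩ := by exact_mod_cast this
    linarith

lemma row_prod (i n : ℕ) (h : i + 1 ≤ n) :
    ∏ j ∈ Finset.range n, (if i < j then ((j : ℚ) - i + 1) / ((j : ℚ) - i) else 1)
      = (n : ℚ) - i := by
  induction n, h using Nat.le_induction with
  | base =>
    rw [Finset.prod_eq_one]
    · push_cast; ring
    · intro x hx
      rw [Finset.mem_range] at hx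
      rw [if_neg (by omega)]
  | succ n hn ih =>
    have hp : (0 : ℚ) < (n : ℚ) - i := by
      have : (i : ℚ) < n := by exact_mod_cast hn
      linarith
    rw [Finset.prod_range_succ, ih, if_pos (by omega)]
    push_cast
    field_simp
    ring

lemma col_prod (j m : ℕ) (h : m ≤ j) :
    ∏ i ∈ Finset.range m, (((j : ℚ) - i + 1) / ((j : ℚ) - i))
      = ((j : ℚ) + 1) / (j + 1 - m) := by
  induction m with
  | zero =>
    have : (j : ℚ) + 1 ≠ 0 := by positivity
    simp [this]
  | succ m ih =>
    have hp : (0 : ℚ) < (j : ℚ) - m := by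
      have : (m : ℚ) < j := by exact_mod_cast h
      linarith
    have hp2 : (j : ℚ) + 1 - m ≠ 0 := by linarith
    have hp3 : (j : ℚ) - m + 1 ≠ 0 := by linarith
    rw [Finset.prod_range_succ, ih (by omega)]
    push_cast
    have : (j : ℚ) + 1 - (m + 1) = j - m := by ring
    rw [this]
    field_simp
    ring

lemma one_le_single (s : Finset ℕ) (f : ℕ → ℚ) (hf : ∀ i ∈ s, 1 ≤ f i) (i : ℕ) (hi : i ∈ s) :
    f i ≤ ∏ j ∈ s, f j := by
  rw [← Finset.mul_prod_erase _ _ hi]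
  apply le_mul_of_one_le_right
  · linarith [hf i hi]
  · exact Finset.one_le_prod fun x hx => hf x (Finset.mem_of_mem_erase hx)

lemma row_le (k : ℕ) (a : Fin k → ℕ) (ha : ∀ i, 1 ≤ a i) (i : ℕ) (hi : i ≤ k) :
    ∏ j ∈ Finset.range (k + 1), slG k a i j ≤ PA k a := by
  rw [PA_eq]
  apply one_le_single (Finset.range (k + 1)) (fun i => ∏ j ∈ Finset.range (k + 1), slG k a i j)
  · intro i _
    apply Finset.one_le_prod
    intro j hj
    exact slG_ge_one k a ha i j (by rw [Finset.mem_range] at hj; omega)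
  · exact Finset.mem_range.2 (by omega)

lemma col_le (k : ℕ) (a : Fin k → ℕ) (ha : ∀ i, 1 ≤ a i) (j : ℕ) (hj : j ≤ k) :
    ∏ i ∈ Finset.range (k + 1), slG k a i j ≤ PA k a := by
  rw [PA_eq]
  apply Finset.prod_le_prod
  · intro i _
    linarith [slG_ge_one k a ha i j hj]
  · intro i _
    apply one_le_single (Finset.range (k + 1)) (fun j => slG k a i j)
    · intro j hj
      exact slG_ge_one k a ha i j (by rw [Finset.mem_range] at hj; omega)
    · exact Finset.mem_range.2 (by omega)

lemma entry_le (k : ℕ) (a : Fin k → ℕ) (ha : ∀ i, 1 ≤ a i) (s : Fin k) :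
    (a s : ℚ) ≤ PA k a := by
  refine le_trans ?_ (row_le k a ha s s.2.le)
  have h := one_le_single (Finset.range (k + 1)) (fun j => slG k a s j) (by
      intro j hj
      exact slG_ge_one k a ha s j (by rw [Finset.mem_range] at hj; omega)) (s + 1)
      (Finset.mem_range.2 (by omega))
  refine le_trans (le_of_eq ?_) h
  simp [slG]

lemma row_bound (k : ℕ) (a : Fin k → ℕ) (ha : ∀ i, 1 ≤ a i) (s : Fin k) (hs : 2 ≤ a s) :
    (k : ℚ) + 1 - s ≤ PA k a := by
  refine le_trans ?_ (row_le k a ha s s.2.le)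
  have := row_prod s (k + 1) (by omega)
  push_cast at this
  rw [← this]
  apply Finset.prod_le_prod
  · intro j _
    split_ifs with h
    · have : ((s : ℕ) : ℚ) < j := by exact_mod_cast h
      apply div_nonneg <;> linarith
    · norm_num
  · intro j hj
    rw [Finset.mem_range] at hj
    split_ifs with h
    · exact slG_ge k a ha s hs s j (by omega) le_rfl h
    · simp [slG, h]

lemma col_bound (k : ℕ) (a : Fin k → ℕ) (ha : ∀ i, 1 ≤ a i) (s : Fin k) (hs : 2 ≤ a s) :
    (s : ℚ) + 2 ≤ PA k a := by
  refine le_trans ?_ (col_le k a ha (s + 1) (by omega))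
  have := col_prod (s + 1) (s + 1) le_rfl
  have e : (((s + 1 : ℕ) : ℚ) + 1) / (((s + 1 : ℕ) : ℚ) + 1 - ((s + 1 : ℕ) : ℚ)) = (s : ℚ) + 2 := by
    push_cast; ring
  rw [e] at this
  rw [← this]
  have hsub : Finset.range (s + 1) ⊆ Finset.range (k + 1) := by
    intro x hx
    rw [Finset.mem_range] at *
    omega
  rw [← Finset.prod_sdiff hsub]
  refine le_trans ?_ (le_mul_of_one_le_left ?_ ?_)
  · apply Finset.prod_le_prod
    · intro i hi
      rw [Finset.mem_range] at hi
      have : (i : ℚ) < (s + 1 : ℕ) := by exact_mod_cast hi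
      apply div_nonneg <;> linarith
    · intro i hi
      rw [Finset.mem_range] at hi
      exact slG_ge k a ha s hs i (s + 1) (by omega) (by omega) (by omega)
  · apply Finset.prod_nonneg
    intro i _
    linarith [slG_ge_one k a ha i (s + 1) (by omega)]
  · apply Finset.one_le_prod
    intro i _
    exact slG_ge_one k a ha i (s + 1) (by omega)

lemma SLSet_finite (N : ℕ) : (SLSet N).Finite := by
  have hfin : (⋃ k ∈ Set.Iic (2 * N), (Sigma.mk k) ''
      (Set.pi Set.univ fun _ : Fin (k + 1) => Set.Iic N)).Finite := by
    apply Set.Finite.biUnion (Set.finite_Iic _)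
    intro k _
    apply Set.Finite.image
    exact Set.Finite.pi fun _ => Set.finite_Iic N
  apply hfin.subset
  rintro ⟨k, a⟩ ⟨ha, ⟨s, hs⟩, hN⟩
  simp only at ha hs hN
  have h1 := (row_bound _ a ha s hs).trans hN
  have h2 := (col_bound _ a ha s hs).trans hN
  simp only [Set.mem_iUnion]
  refine ⟨k, ?_, a, ?_, rfl⟩
  · rw [Set.mem_Iic]
    have : (k : ℚ) ≤ (2 * N : ℕ) := by push_cast at *; linarith
    exact_mod_cast this
  · intro i _
    rw [Set.mem_Iic]
    exact_mod_cast (entry_le _ a ha i).trans hN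

lemma slG_fund (k : ℕ) (s : ℕ) (i j : ℕ) (hj : j ≤ k) :
    slG k (fun x : Fin k => if (x : ℕ) = s then 2 else 1) i j
      = if i ≤ s ∧ s < j then ((j : ℚ) - i + 1) / ((j : ℚ) - i) else 1 := by
  unfold slG
  by_cases h : i < j
  · have hp : (0 : ℚ) < (j : ℚ) - i := by
      have : (i : ℚ) < j := by exact_mod_cast h
      linarith
    rw [if_pos h]
    have : (∑ t ∈ Finset.Ico i j, if h : t < k then
        (((fun x : Fin k => if (x : ℕ) = s then 2 else 1) ⟨t, h⟩ : ℕ) : ℚ) else 0)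
        = ∑ t ∈ Finset.Ico i j, ((1 : ℚ) + if t = s then 1 else 0) := by
      apply Finset.sum_congr rfl
      intro t ht
      rw [Finset.mem_Ico] at ht
      rw [dif_pos (by omega)]
      split_ifs with hh <;> norm_num [hh]
    rw [this, sum_ind i j s h]
    split_ifs
    · rfl
    · rw [add_zero, div_self hp.ne']
  · rw [if_neg h, if_neg (by omega)]

lemma PA_std (k : ℕ) :
    PA (k + 1) (fun x : Fin (k + 1) => if (x : ℕ) = 0 then 2 else 1) = k + 2 := by
  rw [PA_eq, Finset.prod_eq_single 0]
  · have := row_prod 0 (k + 1 + 1) (by omega)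
    refine Eq.trans (Finset.prod_congr rfl ?_) (this.trans ?_)
    rotate_left
    · push_cast; ring
    · intro j hj
      rw [Finset.mem_range] at hj
      rw [slG_fund _ _ _ _ (by omega)]
      simp
  · intro i _ hi
    apply Finset.prod_eq_one
    intro j hj
    rw [Finset.mem_range] at hj
    rw [slG_fund _ _ _ _ (by omega), if_neg (by omega)]
  · simp

lemma PA_dual (k : ℕ) :
    PA (k + 1) (fun x : Fin (k + 1) => if (x : ℕ) = k then 2 else 1) = k + 2 := by
  rw [PA_eq, Finset.prod_comm, Finset.prod_eq_single (k + 1)]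
  · have := col_prod (k + 1) (k + 1) le_rfl
    rw [Finset.prod_range_succ, slG_fund _ _ _ _ le_rfl, if_neg (by omega), mul_one]
    refine Eq.trans (Finset.prod_congr rfl ?_) (this.trans ?_)
    rotate_left
    · push_cast; ring
    · intro i hi
      rw [Finset.mem_range] at hi
      rw [slG_fund _ _ _ _ le_rfl, if_pos (by omega)]
  · intro j hj hj'
    apply Finset.prod_eq_one
    intro i hi
    rw [Finset.mem_range] at hj
    rw [slG_fund _ _ _ _ (by omega), if_neg (by omega)]
  · simp

lemma PA_one (a : Fin 1 → ℕ) : PA 1 a = a 0 := by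
  simp [PA, Finset.prod_range_succ]

lemma PA_two (a : Fin 2 → ℕ) : PA 2 a = a 0 * a 1 * (a 0 + a 1) / 2 := by
  simp [PA, Finset.prod_range_succ, Finset.sum_range_succ]
  ring

lemma main_count (N : ℕ) (hN : 36 ≤ N) : 3 * N < (SLSet N).ncard := by
  classical
  have hNQ : (36 : ℚ) ≤ N := by exact_mod_cast hN
  let f1 : ℕ → Σ k : ℕ, Fin (k + 1) → ℕ := fun m => ⟨0, fun _ => m + 2⟩
  let f2 : ℕ → Σ k : ℕ, Fin (k + 1) → ℕ := fun m => ⟨m + 1, fun x => if (x : ℕ) = 0 then 2 else 1⟩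
  let f3 : ℕ → Σ k : ℕ, Fin (k + 1) → ℕ :=
    fun m => ⟨m + 1, fun x => if (x : ℕ) = m + 1 then 2 else 1⟩
  let f4 : ℕ → Σ k : ℕ, Fin (k + 1) → ℕ := fun m => ⟨1, ![m + 3, 1]⟩
  let c : (Σ k : ℕ, Fin (k + 1) → ℕ) → ℕ := fun p => p.2 0
  have c1 : ∀ m, c (f1 m) = m + 2 := fun m => rfl
  have c4 : ∀ m, c (f4 m) = m + 3 := fun m => rfl
  have c2 : ∀ m, c (f2 m) = 2 := fun m => by simp [c, f2]
  have c3 : ∀ m, c (f3 m) = 1 := fun m => by simp [c, f3]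
  have i1 : f1.Injective := fun x y h => by
    have := congrArg c h; rw [c1, c1] at this; omega
  have i4 : f4.Injective := fun x y h => by
    have := congrArg c h; rw [c4, c4] at this; omega
  have i2 : f2.Injective := fun x y h => by
    have : x + 1 = y + 1 := congrArg Sigma.fst h
    omega
  have i3 : f3.Injective := fun x y h => by
    have : x + 1 = y + 1 := congrArg Sigma.fst h
    omega
  let S1 := (Finset.range (N - 1)).image f1
  let S2 := (Finset.range (N - 2)).image f2
  let S3 := (Finset.range (N - 2)).image f3
  let S4 := (Finset.range 6).image f4
  have d12 : Disjoint S1 S2 := by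
    rw [Finset.disjoint_left]
    intro p h h'
    simp only [S1, S2, Finset.mem_image] at h h'
    obtain ⟨x, _, rfl⟩ := h
    obtain ⟨y, _, h⟩ := h'
    have : y + 1 = 0 := congrArg Sigma.fst h
    omega
  have d123 : Disjoint (S1 ∪ S2) S3 := by
    rw [Finset.disjoint_left]
    intro p h h'
    simp only [S1, S2, S3, Finset.mem_union, Finset.mem_image] at h h'
    obtain ⟨y, _, rfl⟩ := h'
    rcases h with ⟨x, _, h⟩ | ⟨x, _, h⟩
    · have := congrArg c h; rw [c1, c3] at this; omega
    · have := congrArg c h; rw [c2, c3] at this; omega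
  have d1234 : Disjoint (S1 ∪ S2 ∪ S3) S4 := by
    rw [Finset.disjoint_left]
    intro p h h'
    simp only [S1, S2, S3, S4, Finset.mem_union, Finset.mem_image] at h h'
    obtain ⟨y, _, rfl⟩ := h'
    rcases h with (⟨x, _, h⟩ | ⟨x, _, h⟩) | ⟨x, _, h⟩
    · have : 0 = 1 := congrArg Sigma.fst h
      omega
    · have := congrArg c h; rw [c2, c4] at this; omega
    · have := congrArg c h; rw [c3, c4] at this; omega
  have hcard : (S1 ∪ S2 ∪ S3 ∪ S4).card = (N - 1) + (N - 2) + (N - 2) + 6 := by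
    rw [Finset.card_union_of_disjoint d1234, Finset.card_union_of_disjoint d123,
      Finset.card_union_of_disjoint d12, Finset.card_image_of_injective _ i1,
      Finset.card_image_of_injective _ i2, Finset.card_image_of_injective _ i3,
      Finset.card_image_of_injective _ i4]
    simp only [Finset.card_range]
  have hsub : ((S1 ∪ S2 ∪ S3 ∪ S4 : Finset _) : Set (Σ k : ℕ, Fin (k + 1) → ℕ)) ⊆ SLSet N := by
    intro p hp
    simp only [S1, S2, S3, S4, Finset.coe_union, Finset.coe_image, Set.mem_union, Set.mem_image,
      Finset.coe_range, Set.mem_Iio] at hp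
    rcases hp with ((⟨x, hx, rfl⟩ | ⟨x, hx, rfl⟩) | ⟨x, hx, rfl⟩) | ⟨x, hx, rfl⟩
    · refine ⟨fun i => ?_, ⟨0, ?_⟩, ?_⟩
      · simp only [f1]; omega
      · simp only [f1]; omega
      · refine (PA_one _).le.trans ?_
        simp only [f1]
        exact_mod_cast (by omega : x + 2 ≤ N)
    · refine ⟨fun i => ?_, ⟨0, ?_⟩, ?_⟩
      · simp only [f2]; split_ifs <;> omega
      · simp [f2]
      · refine (PA_std (x + 1)).le.trans ?_
        exact_mod_cast (by omega : x + 1 + 2 ≤ N)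
    · refine ⟨fun i => ?_, ⟨Fin.last _, ?_⟩, ?_⟩
      · simp only [f3]; split_ifs <;> omega
      · simp [f3]
      · refine (PA_dual (x + 1)).le.trans ?_
        exact_mod_cast (by omega : x + 1 + 2 ≤ N)
    · refine ⟨fun i => ?_, ⟨(0 : Fin 2), ?_⟩, ?_⟩
      · change Fin 2 at i
        fin_cases i <;> simp [f4]
      · simp [f4]
      · refine (PA_two _).le.trans ?_
        have : (x : ℚ) ≤ 5 := by exact_mod_cast (by omega : x ≤ 5)
        have h0 : (0 : ℚ) ≤ x := by positivity
        simp [f4]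
        nlinarith
  have := Set.ncard_le_ncard hsub (SLSet_finite N)
  rw [Set.ncard_coe_finset, hcard] at this
  omega

/-- For all sufficiently large `N`, `R_N(SL) > 3N`; in particular any linear bound
`R_N(SL) ≤ C · N` (for all positive `N`) forces `C > 3`. -/
theorem sl_count_gt_three_n :
    (∃ M : ℕ, ∀ N : ℕ, M ≤ N → 3 * N < (SLSet N).ncard) ∧
    ∀ C : ℝ, (∀ N : ℕ, 0 < N → ((SLSet N).ncard : ℝ) ≤ C * N) → 3 < C := by
  refine ⟨⟨36, main_count⟩, fun C hC => ?_⟩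
  have h1 := hC 36 (by norm_num)
  have h2 : ((3 * 36 : ℕ) : ℝ) < ((SLSet 36).ncard : ℝ) := by
    exact_mod_cast main_count 36 le_rfl
  push_cast at h1 h2
  linarith
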